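/- Let k be a field and A = ⊕_{m≥0} A_m an ℕ-graded integral domain with A_0 = k. Let n ≥ 0 and let f₁ ∈ A_n and f₂ ∈ A_{n+1} be nonzero homogeneous elements. Then the element f = f₂/f₁ of Frac(A) is transcendental over the subfield K^hom(A), and Frac(A) = K^hom(A)(f). In particular, if A is a finitely generated k-algebra, then the transcendence degree of K^hom(A) over k equals (Krull dimension of A) − 1. -/

import Mathlib

/-- The homogeneous fraction field `K^hom(A)` of a graded domain `A = ⊕ 𝒜 m`, viewed
inside a fraction field `F` of `A`: the subfield of `F` generated over `k` by all
fractions `a₁ / a₂` with `a₁, a₂` homogeneous of the same degree and `a₂ ≠ 0`. -/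
noncomputable def homogeneousFractionField (k : Type*) {A F : Type*} [Field k] [CommRing A]
    [IsDomain A] [Algebra k A] [Field F] [Algebra A F] [IsFractionRing A F] [Algebra k F]
    [IsScalarTower k A F] (𝒜 : ℕ → Submodule k A) : IntermediateField k F :=
  IntermediateField.adjoin k
    {x : F | ∃ m : ℕ, ∃ b₁ ∈ 𝒜 m, ∃ b₂ ∈ 𝒜 m, b₂ ≠ 0 ∧
      x = algebraMap A F b₁ / algebraMap A F b₂}

theorem aux_krull' {R S : Type*} [CommRing R] [CommRing S] [IsDomain S] [Algebra R S] [Algebra.IsIntegral R S]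
    (h : Function.Injective (algebraMap R S)) : ringKrullDim R ≤ ringKrullDim S := by
  have : FaithfulSMul R S := (faithfulSMul_iff_algebraMap_injective R S).2 h
  refine iSup_le fun l => ?_
  obtain ⟨Q, -, hQ, e⟩ := Ideal.exists_ideal_over_prime_of_isIntegral l.head.asIdeal (⊥ : Ideal S) (by
    rw [← RingHom.ker_eq_comap_bot, (RingHom.injective_iff_ker_eq_bot _).1 h]; exact bot_le)
  have : Q.LiesOver l.head.asIdeal := ⟨e.symm⟩
  obtain ⟨L, hL, -⟩ := Ideal.exists_ltSeries_of_hasGoingUp l Q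
  rw [← hL]
  exact le_iSup (fun p : LTSeries (PrimeSpectrum S) => (p.length : WithBot ℕ∞)) L

theorem aux_krull {R S : Type*} [CommRing R] [CommRing S] [IsDomain S] [Algebra R S] [Algebra.IsIntegral R S]
    (h : Function.Injective (algebraMap R S)) : ringKrullDim R = ringKrullDim S := by
  apply le_antisymm
  · exact aux_krull' h
  · refine Order.krullDim_le_of_strictMono (PrimeSpectrum.comap (algebraMap R S)) ?_
    intro I J hIJ
    exact Ideal.IsIntegral.comap_lt_comap (I := I.asIdeal) (J := J.asIdeal) hIJ

theorem aux_mem {k : Type*} {A F : Type*} [Field k] [CommRing A] [IsDomain A] [Algebra k A]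
    [Field F] [Algebra A F] [IsFractionRing A F] [Algebra k F] [IsScalarTower k A F]
    (𝒜 : ℕ → Submodule k A) [GradedAlgebra 𝒜] (x : F)
    (hx : x ∈ homogeneousFractionField k 𝒜 (F := F)) :
    ∃ m : ℕ, ∃ b₁ ∈ 𝒜 m, ∃ b₂ ∈ 𝒜 m, b₂ ≠ 0 ∧
      x = algebraMap A F b₁ / algebraMap A F b₂ := by
  have inj := IsFractionRing.injective A F
  have nz : ∀ a : A, a ≠ 0 → algebraMap A F a ≠ 0 := fun a ha => by simpa using ha
  induction hx using IntermediateField.adjoin_induction with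
  | mem x hx => exact hx
  | algebraMap r =>
    refine ⟨0, algebraMap k A r, ?_, 1, SetLike.GradedOne.one_mem, one_ne_zero, ?_⟩
    · exact SetLike.algebraMap_mem_graded 𝒜 r
    · simp [← IsScalarTower.algebraMap_apply]
  | add x y _ _ hx hy =>
    obtain ⟨m, a, ha, b, hb, hb0, rfl⟩ := hx
    obtain ⟨l, c, hc, d, hd, hd0, rfl⟩ := hy
    refine ⟨m + l, a * d + b * c, add_mem (SetLike.mul_mem_graded ha hd) (SetLike.mul_mem_graded hb hc), b * d, SetLike.mul_mem_graded hb hd, mul_ne_zero hb0 hd0, ?_⟩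
    rw [div_add_div _ _ (nz _ hb0) (nz _ hd0)]
    simp
  | inv x _ hx =>
    obtain ⟨m, a, ha, b, hb, hb0, rfl⟩ := hx
    by_cases h : a = 0
    · exact ⟨m, a, ha, b, hb, hb0, by simp [h]⟩
    · exact ⟨m, b, hb, a, ha, h, by simp⟩
  | mul x y _ _ hx hy =>
    obtain ⟨m, a, ha, b, hb, hb0, rfl⟩ := hx
    obtain ⟨l, c, hc, d, hd, hd0, rfl⟩ := hy
    refine ⟨m + l, a * c, SetLike.mul_mem_graded ha hc, b * d, SetLike.mul_mem_graded hb hd, mul_ne_zero hb0 hd0, ?_⟩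
    simp [div_mul_div_comm]

theorem aux_denom {k : Type*} {A F : Type*} [Field k] [CommRing A] [IsDomain A] [Algebra k A]
    [Field F] [Algebra A F] [IsFractionRing A F] [Algebra k F] [IsScalarTower k A F]
    (𝒜 : ℕ → Submodule k A) [GradedAlgebra 𝒜] (x : ℕ → F)
    (hx : ∀ i, x i ∈ homogeneousFractionField k 𝒜 (F := F)) (N : ℕ) :
    ∃ d : ℕ, ∃ D ∈ 𝒜 d, D ≠ 0 ∧ ∀ i < N, ∃ c ∈ 𝒜 d, x i * algebraMap A F D = algebraMap A F c := by
  induction N with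
  | zero => exact ⟨0, 1, SetLike.GradedOne.one_mem, one_ne_zero, by simp⟩
  | succ N ih =>
    obtain ⟨d, D, hD, hD0, H⟩ := ih
    obtain ⟨m, a, ha, b, hb, hb0, hab⟩ := aux_mem 𝒜 _ (hx N)
    have hb0' : algebraMap A F b ≠ 0 := by simpa using hb0
    refine ⟨d + m, D * b, SetLike.mul_mem_graded hD hb, mul_ne_zero hD0 hb0, fun i hi => ?_⟩
    rcases Nat.lt_succ_iff_lt_or_eq.1 hi with h | rfl
    · obtain ⟨c, hc, e⟩ := H i h
      exact ⟨c * b, SetLike.mul_mem_graded hc hb, by rw [map_mul, map_mul, ← e]; ring⟩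
    · refine ⟨D * a, SetLike.mul_mem_graded hD ha, ?_⟩
      rw [hab]; simp only [map_mul]; field_simp

theorem aux_trans {k : Type*} {A F : Type*} [Field k] [CommRing A] [IsDomain A] [Algebra k A]
    [Field F] [Algebra A F] [IsFractionRing A F] [Algebra k F] [IsScalarTower k A F]
    (𝒜 : ℕ → Submodule k A) [GradedAlgebra 𝒜]
    (n : ℕ) (f₁ f₂ : A) (hf₁ : f₁ ∈ 𝒜 n) (hf₂ : f₂ ∈ 𝒜 (n + 1))
    (hf₁0 : f₁ ≠ 0) (hf₂0 : f₂ ≠ 0) :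
    Transcendental (homogeneousFractionField k 𝒜 (F := F))
        (algebraMap A F f₂ / algebraMap A F f₁) := by
  have inj := IsFractionRing.injective A F
  have nz : algebraMap A F f₁ ≠ 0 := by simpa using hf₁0
  rw [transcendental_iff]
  intro p hp
  set N := p.natDegree with hN
  obtain ⟨d, D, hD, hD0, H⟩ := aux_denom 𝒜 (fun i => (p.coeff i : F)) (fun i => (p.coeff i).2) (N + 1)
  have nzD : algebraMap A F D ≠ 0 := by simpa using hD0
  choose! c hc e using H
  have key : ∑ i ∈ Finset.range (N + 1), c i * (f₂ ^ i * f₁ ^ (N - i)) = 0 := by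
    apply inj
    rw [map_zero, map_sum]
    rw [Polynomial.aeval_eq_sum_range] at hp
    have := congrArg (· * (algebraMap A F D * algebraMap A F f₁ ^ N)) hp
    simp only [zero_mul, Finset.sum_mul] at this
    rw [← this]
    refine Finset.sum_congr rfl fun i hi => ?_
    have hi' := Finset.mem_range.1 hi
    rw [map_mul, ← e i hi', Algebra.smul_def, map_mul, map_pow, map_pow, div_pow]
    have : algebraMap A F f₁ ^ N = algebraMap A F f₁ ^ i * algebraMap A F f₁ ^ (N - i) := by
      rw [← pow_add]; congr 1; omega
    rw [this]
    have h3 : algebraMap (homogeneousFractionField k 𝒜 (F := F)) F (p.coeff i) = (p.coeff i : F) := rfl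
    rw [h3]
    field_simp
  have hmem : ∀ i < N + 1, c i * (f₂ ^ i * f₁ ^ (N - i)) ∈ 𝒜 (d + N * n + i) := by
    intro i hi
    have := SetLike.mul_mem_graded (hc i hi) (SetLike.mul_mem_graded (SetLike.pow_mem_graded i hf₂) (SetLike.pow_mem_graded (N - i) hf₁))
    convert! this using 2
    obtain ⟨j, hj⟩ := Nat.exists_eq_add_of_le (Nat.lt_succ_iff.1 hi)
    rw [hj]
    simp only [Nat.add_sub_cancel_left, smul_eq_mul]
    ring
  ext i
  by_cases hi : i < N + 1
  · have h1 := congrArg (GradedRing.proj 𝒜 (d + N * n + i)) key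
    rw [map_sum, map_zero, Finset.sum_eq_single i] at h1
    · rw [GradedRing.proj_apply, DirectSum.decompose_of_mem_same _ (hmem i hi)] at h1
      have h2 : c i = 0 := by
        rcases mul_eq_zero.1 h1 with h | h
        · exact h
        · exact absurd h (mul_ne_zero (pow_ne_zero _ hf₂0) (pow_ne_zero _ hf₁0))
      have := e i hi
      rw [h2, map_zero] at this
      simpa using (mul_eq_zero.1 this).resolve_right nzD
    · intro j hj hji
      rw [GradedRing.proj_apply, DirectSum.decompose_of_mem_ne _ (hmem j (Finset.mem_range.1 hj))]
      omega
    · intro h; exact absurd (Finset.mem_range.2 hi) h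
  · rw [Polynomial.coeff_eq_zero_of_natDegree_lt (by omega)]; simp

theorem aux_adjoin {k : Type*} {A F : Type*} [Field k] [CommRing A] [IsDomain A] [Algebra k A]
    [Field F] [Algebra A F] [IsFractionRing A F] [Algebra k F] [IsScalarTower k A F]
    (𝒜 : ℕ → Submodule k A) [GradedAlgebra 𝒜]
    (n : ℕ) (f₁ f₂ : A) (hf₁ : f₁ ∈ 𝒜 n) (hf₂ : f₂ ∈ 𝒜 (n + 1))
    (hf₁0 : f₁ ≠ 0) (hf₂0 : f₂ ≠ 0) :
    IntermediateField.adjoin k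
        ((homogeneousFractionField k 𝒜 (F := F) : Set F) ∪
          {algebraMap A F f₂ / algebraMap A F f₁}) = ⊤ := by
  have nz1 : algebraMap A F f₁ ≠ 0 := by simpa using hf₁0
  have nz2 : algebraMap A F f₂ ≠ 0 := by simpa using hf₂0
  rw [eq_top_iff]
  intro x _
  set L := IntermediateField.adjoin k
        ((homogeneousFractionField k 𝒜 (F := F) : Set F) ∪
          {algebraMap A F f₂ / algebraMap A F f₁}) with hL
  have hf : algebraMap A F f₂ / algebraMap A F f₁ ∈ L :=
    IntermediateField.subset_adjoin _ _ (Or.inr rfl)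
  have hA : ∀ a : A, algebraMap A F a ∈ L := by
    intro a
    induction a using DirectSum.Decomposition.inductionOn 𝒜 with
    | zero => simp
    | @homogeneous m a =>
      have h1 : algebraMap A F (a * f₁ ^ m) / algebraMap A F (f₂ ^ m) ∈ L := by
        refine IntermediateField.subset_adjoin _ _ (Or.inl (IntermediateField.subset_adjoin _ _ ?_))
        refine ⟨m * (n + 1), _, ?_, _, ?_, pow_ne_zero m hf₂0, rfl⟩
        · have := SetLike.mul_mem_graded a.2 (SetLike.pow_mem_graded m hf₁)
          convert! this using 2
          simp only [smul_eq_mul]; ring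
        · exact SetLike.pow_mem_graded m hf₂
      have h2 := mul_mem h1 (pow_mem hf m)
      convert! h2 using 1
      simp only [map_mul, map_pow, div_pow]
      field_simp
    | add a b ha hb => rw [map_add]; exact add_mem ha hb
  obtain ⟨a, b, hb, rfl⟩ := IsFractionRing.div_surjective (A := A) x
  exact div_mem (hA a) (hA b)

universe u v w
theorem aux_dim {k : Type u} {A : Type v} [Field k] [CommRing A] [IsDomain A] [Algebra k A]
    (hfin : Algebra.FiniteType k A) (d : ℕ) (hd : ringKrullDim A = d) : Algebra.trdeg k A = d := by
  obtain ⟨s, g, hg, hi⟩ := exists_integral_inj_algHom_of_fg k A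
  algebraize [g.toRingHom]
  have hinj : Function.Injective (algebraMap (MvPolynomial (Fin s) k) A) := hg
  have : FaithfulSMul (MvPolynomial (Fin s) k) A := (faithfulSMul_iff_algebraMap_injective _ _).2 hinj
  have h1 := aux_krull hinj
  rw [hd, MvPolynomial.ringKrullDim_of_isNoetherianRing, ringKrullDim_eq_zero_of_field] at h1
  have h2 : s = d := by
    simp at h1
    exact_mod_cast h1
  have h3 := lift_trdeg_add_eq k (MvPolynomial (Fin s) k) A
  rw [trdeg_eq_zero_iff.2 (inferInstance : Algebra.IsAlgebraic (MvPolynomial (Fin s) k) A)] at h3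
  rw [← h2]
  have h4 := h3.symm
  simpa using h4

theorem aux_one {K : Type u} {F : Type v} [Field K] [Field F] [Algebra K F] (f : F)
   (h1 : Transcendental K f) (h2 : IntermediateField.adjoin K {f} = ⊤) : Algebra.trdeg K F = 1 := by
  apply le_antisymm
  · have : Algebra.IsAlgebraic (Algebra.adjoin K {f}) F := by
      refine ⟨fun x => ?_⟩
      have hx : x ∈ IntermediateField.adjoin K {f} := h2 ▸ IntermediateField.mem_top
      obtain ⟨r, hr, t, ht, rfl⟩ := IntermediateField.mem_adjoin_iff_div.1 hx
      rw [div_eq_mul_inv]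
      exact (isAlgebraic_algebraMap (⟨r, hr⟩ : Algebra.adjoin K {f})).mul
        (isAlgebraic_algebraMap (⟨t, ht⟩ : Algebra.adjoin K {f})).inv
    simpa using Algebra.IsAlgebraic.trdeg_le_cardinalMk K ({f} : Set F)
  · have : Algebra.Transcendental K F := ⟨⟨f, h1⟩⟩
    exact Cardinal.one_le_iff_pos.2 (trdeg_pos K F)

theorem homogeneousFractionField_transcendental_and_adjoin
    (k : Type*) {A F : Type*} [Field k] [CommRing A] [IsDomain A] [Algebra k A]
    [Field F] [Algebra A F] [IsFractionRing A F] [Algebra k F] [IsScalarTower k A F]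
    (𝒜 : ℕ → Submodule k A) [GradedAlgebra 𝒜] (h0 : 𝒜 0 = 1)
    (n : ℕ) (f₁ f₂ : A) (hf₁ : f₁ ∈ 𝒜 n) (hf₂ : f₂ ∈ 𝒜 (n + 1))
    (hf₁0 : f₁ ≠ 0) (hf₂0 : f₂ ≠ 0) :
    Transcendental (homogeneousFractionField k 𝒜 (F := F))
        (algebraMap A F f₂ / algebraMap A F f₁) ∧
    IntermediateField.adjoin k
        ((homogeneousFractionField k 𝒜 (F := F) : Set F) ∪
          {algebraMap A F f₂ / algebraMap A F f₁}) = ⊤ ∧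
    (Algebra.FiniteType k A → ∀ dA : ℕ, ringKrullDim A = dA →
      ∃ s : Finset (homogeneousFractionField k 𝒜 (F := F)),
        IsTranscendenceBasis k
          (fun x : (s : Set (homogeneousFractionField k 𝒜 (F := F))) =>
            (x : (homogeneousFractionField k 𝒜 (F := F)))) ∧
        s.card + 1 = dA) := by
  have hT := aux_trans (F := F) 𝒜 n f₁ f₂ hf₁ hf₂ hf₁0 hf₂0
  have hadj := aux_adjoin (F := F) 𝒜 n f₁ f₂ hf₁ hf₂ hf₁0 hf₂0
  refine ⟨hT, hadj, fun hfin dA hdA => ?_⟩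
  have htA := aux_dim hfin dA hdA
  have : FaithfulSMul A F := (faithfulSMul_iff_algebraMap_injective _ _).2 (IsFractionRing.injective A F)
  have h3 := lift_trdeg_add_eq k A F
  have halg : Algebra.IsAlgebraic A F := IsLocalization.isAlgebraic F (nonZeroDivisors A)
  rw [htA, trdeg_eq_zero_iff.2 halg] at h3
  have htF : Algebra.trdeg k F = dA := by
    have := h3.symm
    simpa using this
  have hone := aux_one _ hT (by
    rw [← IntermediateField.restrictScalars_eq_top_iff (K := k), ← hadj,
      IntermediateField.restrictScalars_adjoin])
  have h4 := trdeg_add_eq k (homogeneousFractionField k 𝒜 (F := F)) (A := F)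
  rw [hone, htF] at h4
  obtain ⟨s, hs⟩ := exists_isTranscendenceBasis k (homogeneousFractionField k 𝒜 (F := F))
  have hlt : Cardinal.mk s < Cardinal.aleph0 := by
    rw [hs.cardinalMk_eq_trdeg]
    exact (self_le_add_right _ _).trans_lt (h4 ▸ Cardinal.natCast_lt_aleph0)
  have hfs : s.Finite := Cardinal.lt_aleph0_iff_set_finite.1 hlt
  lift s to Finset (homogeneousFractionField k 𝒜 (F := F)) using hfs
  refine ⟨s, hs, ?_⟩
  rw [← hs.cardinalMk_eq_trdeg] at h4
  simp only [Finset.coe_sort_coe, Cardinal.mk_coe_finset] at h4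
  exact_mod_cast h4
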